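/- arXiv:1006.2296 — 3 statements merged into one kernel-verified Lean document; each statement's English description precedes it below -/
import Mathlib

section
/- (Herman–Marco–Sauzin coupling lemma) Let m, m' ≥ 1, let F : 𝔸^m → 𝔸^m and G : 𝔸^{m'} → 𝔸^{m'} be maps, and let f : 𝔸^m → ℝ and g : 𝔸^{m'} → ℝ be C² Hamiltonian functions generating complete Hamiltonian vector fields. Suppose there is a point a ∈ 𝔸^{m'} which is q-periodic for G (i.e. G^q(a) = a) and such that the synchronization conditions hold: g(a) = 1, dg(a) = 0, and g(G^k(a)) = 0, dg(G^k(a)) = 0 for all 1 ≤ k ≤ q−1. Then the Hamiltonian vector field of f ⊗ g is complete, the map Ψ = Φ^{f⊗g} ∘ (F × G) : 𝔸^{m+m'} → 𝔸^{m+m'} is well defined, and for every x ∈ 𝔸^m one has Ψ^q(x, a) = (Φ^f(F^q(x)), a). -/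
open scoped BigOperators
open Real

noncomputable section

/-- The circle `𝕋 = ℝ/ℤ`. -/
abbrev T1 := AddCircle (1 : ℝ)

instance : Fact ((0 : ℝ) < 1) := ⟨one_pos⟩

/-- The annulus `𝔸^N = 𝕋^N × ℝ^N` with angle-action coordinates. -/
abbrev Ann (N : ℕ) := (Fin N → T1) × (Fin N → ℝ)

/-- Projection of the universal cover `ℝ^N × ℝ^N` onto the annulus `𝔸^N`. -/
noncomputable def projAnn (N : ℕ) : ((Fin N → ℝ) × (Fin N → ℝ)) → Ann N :=
  fun x => (fun i => (x.1 i : T1), x.2)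

/-- `Φ` is the complete flow of the Hamiltonian `H` on the annulus `𝔸^N`: it is a
one-parameter family of maps whose orbits lift to curves on the universal cover solving
Hamilton's equations `θ' = ∂H/∂I`, `I' = −∂H/∂θ`.  `Φ 1` is the time-one map `Φ^H`. -/
def IsHamFlow (N : ℕ) (H : Ann N → ℝ) (Φ : ℝ → Ann N → Ann N) : Prop :=
  (∀ x, Φ 0 x = x) ∧ (∀ s t : ℝ, ∀ x, Φ (s + t) x = Φ s (Φ t x)) ∧
    ∀ x : Ann N, ∃ c : ℝ → (Fin N → ℝ) × (Fin N → ℝ),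
      (∀ t, projAnn N (c t) = Φ t x) ∧
      ∀ t : ℝ, ∀ i : Fin N,
        HasDerivAt (fun s => (c s).1 i)
          (fderiv ℝ (H ∘ projAnn N) (c t) ((0 : Fin N → ℝ), Pi.single i 1)) t ∧
        HasDerivAt (fun s => (c s).2 i)
          (-(fderiv ℝ (H ∘ projAnn N) (c t) (Pi.single i 1, (0 : Fin N → ℝ)))) t

/-- `Φ` is the complete flow of the Hamiltonian `H` on the product annulus
`𝔸^M × 𝔸^{M'} ≅ 𝔸^{M+M'}`, defined through lifts to the universal cover. -/
def IsHamFlowProd (M M' : ℕ) (H : Ann M × Ann M' → ℝ)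
    (Φ : ℝ → Ann M × Ann M' → Ann M × Ann M') : Prop :=
  (∀ x, Φ 0 x = x) ∧ (∀ s t : ℝ, ∀ x, Φ (s + t) x = Φ s (Φ t x)) ∧
    ∀ x : Ann M × Ann M',
      ∃ c : ℝ → ((Fin M → ℝ) × (Fin M → ℝ)) × ((Fin M' → ℝ) × (Fin M' → ℝ)),
        (∀ t, (projAnn M (c t).1, projAnn M' (c t).2) = Φ t x) ∧
        ∀ t : ℝ,
          (∀ i : Fin M,
            HasDerivAt (fun s => (c s).1.1 i)
              (fderiv ℝ (fun y => H (projAnn M y.1, projAnn M' y.2)) (c t)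
                (((0 : Fin M → ℝ), Pi.single i 1), 0)) t ∧
            HasDerivAt (fun s => (c s).1.2 i)
              (-(fderiv ℝ (fun y => H (projAnn M y.1, projAnn M' y.2)) (c t)
                ((Pi.single i 1, (0 : Fin M → ℝ)), 0))) t) ∧
          (∀ j : Fin M',
            HasDerivAt (fun s => (c s).2.1 j)
              (fderiv ℝ (fun y => H (projAnn M y.1, projAnn M' y.2)) (c t)
                (0, ((0 : Fin M' → ℝ), Pi.single j 1))) t ∧
            HasDerivAt (fun s => (c s).2.2 j)
              (-(fderiv ℝ (fun y => H (projAnn M y.1, projAnn M' y.2)) (c t)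
                (0, (Pi.single j 1, (0 : Fin M' → ℝ))))) t)

/-!
Along an orbit of `f ⊗ g` both `f` and `g` are constant, so the two components follow the orbits of
`f` and `g` at the constant speeds `g` and `f`; this explicit formula shows that the flow is
complete. If moreover the second component starts at a critical point of `g` it stays there, and
the first component is moved by the flow of `f` for the time `g`. At the points `G^k(a)` with
`1 ≤ k < q` this time is `0`, so that `Φ^{f⊗g}` does nothing, whereas at `G^q(a) = a` it is `1`.

Of the symplectic form this uses only that its Poisson tensor is antisymmetric and constant on the
universal cover.
-/

variable {E E' A A' : Type*}
  [NormedAddCommGroup E] [NormedSpace ℝ E] [NormedAddCommGroup E'] [NormedSpace ℝ E']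
  [AddCommGroup A] [AddCommGroup A']

theorem hasDerivAt_prod_iff {c : ℝ → E × E'} {u : E} {v : E'} {t : ℝ} :
    HasDerivAt c (u, v) t ↔
      HasDerivAt (fun s => (c s).1) u t ∧ HasDerivAt (fun s => (c s).2) v t :=
  ⟨fun h => ⟨by simpa using (HasDerivAt.hasFDerivAt h).fst.hasDerivAt,
    by simpa using (HasDerivAt.hasFDerivAt h).snd.hasDerivAt⟩, fun h => h.1.prodMk h.2⟩

theorem isIntegralCurve_eq_of_locallyLipschitz {V : E → E} (hV : LocallyLipschitz V)
    {c d : ℝ → E} (hc : IsIntegralCurve c fun _ => V) (hd : IsIntegralCurve d fun _ => V)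
    (h0 : c 0 = d 0) : c = d := by
  funext t
  let I : Set ℝ := Set.Icc (-(|t| + 1)) (|t| + 1)
  have hI : ∀ s ∈ Set.Ioo (-(|t| + 1)) (|t| + 1), s ∈ I := fun _ hs => Set.Ioo_subset_Icc_self hs
  have hcompact : IsCompact (c '' I ∪ d '' I) :=
    (isCompact_Icc.image hc.continuous).union (isCompact_Icc.image hd.continuous)
  obtain ⟨K, hK⟩ := hV.locallyLipschitzOn.exists_lipschitzOnWith_of_compact hcompact
  refine ODE_solution_unique_of_mem_Ioo (v := fun _ => V) (s := fun _ => c '' I ∪ d '' I)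
    (t₀ := 0) (fun _ _ => hK) ?_ (fun s hs => ⟨hc s, .inl ⟨s, hI s hs, rfl⟩⟩)
    (fun s hs => ⟨hd s, .inr ⟨s, hI s hs, rfl⟩⟩) h0 ?_
  · constructor <;> linarith [abs_nonneg t]
  · constructor <;> linarith [neg_abs_le t, le_abs_self t]

/-- `Φ` is a one-parameter group of maps of `A` whose orbits lift through `p` to integral curves of
the vector field `V`. Here `A` plays the role of the quotient of `E` by the group of deck
transformations `ker p`, and the flow of `V` on it is described without a smooth structure. -/
structure IsLiftedFlow (p : E →+ A) (V : E → E) (Φ : ℝ → A → A) : Prop where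
  zero_apply : ∀ x, Φ 0 x = x
  add_apply : ∀ s t x, Φ (s + t) x = Φ s (Φ t x)
  exists_lift : ∀ x, ∃ c : ℝ → E, (∀ t, p (c t) = Φ t x) ∧ IsIntegralCurve c fun _ => V

namespace IsLiftedFlow

variable {p : E →+ A} {V : E → E} {Φ : ℝ → A → A}

theorem surjective (hΦ : IsLiftedFlow p V Φ) : Function.Surjective p := fun x =>
  have ⟨c, hc, _⟩ := hΦ.exists_lift x
  ⟨c 0, (hc 0).trans (hΦ.zero_apply x)⟩

theorem apply_eq_of_isIntegralCurve (hΦ : IsLiftedFlow p V Φ) (hV : LocallyLipschitz V)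
    (hVp : V.FactorsThrough p) {c : ℝ → E} (hc : IsIntegralCurve c fun _ => V) (t : ℝ) :
    Φ t (p (c 0)) = p (c t) := by
  obtain ⟨d, hd, hdV⟩ := hΦ.exists_lift (p (c 0))
  have hker : p (c 0 - d 0) = 0 := by rw [map_sub, hd, hΦ.zero_apply, sub_self]
  have htranslate : IsIntegralCurve (fun t => d t + (c 0 - d 0)) fun _ => V := fun t => by
    beta_reduce
    rw [hVp (show p (d t + (c 0 - d 0)) = p (d t) by rw [map_add, hker, add_zero])]
    exact (hdV t).add_const _
  have hcd : c = fun t => d t + (c 0 - d 0) :=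
    isIntegralCurve_eq_of_locallyLipschitz hV hc htranslate (by simp)
  rw [congrFun hcd t, map_add, hker, add_zero, hd]

end IsLiftedFlow

/-- `J` is a constant Poisson tensor on `E`, encoded as the map from covectors to vectors; the
condition says that it is antisymmetric. -/
def IsPoissonTensor (J : StrongDual ℝ E →L[ℝ] E) : Prop :=
  ∀ L : StrongDual ℝ E, L (J L) = 0

/-- The Hamiltonian vector field of `H` with respect to a constant Poisson tensor `J`. It is defined
for every `J`, antisymmetric or not. -/
def hamiltonianField (J : StrongDual ℝ E →L[ℝ] E) (H : E → ℝ) (z : E) : E :=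
  J (fderiv ℝ H z)

/-- The Poisson tensor of a product of two Poisson spaces. -/
def prodPoisson (J : StrongDual ℝ E →L[ℝ] E) (J' : StrongDual ℝ E' →L[ℝ] E') :
    StrongDual ℝ (E × E') →L[ℝ] E × E' :=
  (J ∘L (ContinuousLinearMap.inl ℝ E E').precomp ℝ).prod
    (J' ∘L (ContinuousLinearMap.inr ℝ E E').precomp ℝ)

section Hamiltonian

variable {J : StrongDual ℝ E →L[ℝ] E} {J' : StrongDual ℝ E' →L[ℝ] E'}
  {h : E → ℝ} {k : E' → ℝ}

@[simp]
theorem prodPoisson_apply (L : StrongDual ℝ (E × E')) :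
    prodPoisson J J' L =
      (J (L ∘L ContinuousLinearMap.inl ℝ E E'), J' (L ∘L ContinuousLinearMap.inr ℝ E E')) :=
  rfl

theorem locallyLipschitz_hamiltonianField (hh : ContDiff ℝ 2 h) :
    LocallyLipschitz (hamiltonianField J h) :=
  (J.contDiff.comp (hh.fderiv_right (m := 1) one_add_one_eq_two.le)).locallyLipschitz

theorem hamiltonianField_comp_factorsThrough (p : E →+ A) (H : A → ℝ) :
    (hamiltonianField J (H ∘ p)).FactorsThrough p := by
  intro y z hyz
  have hperiodic : (fun w => (H ∘ p) (w + (y - z))) = H ∘ p := by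
    funext w
    simp [hyz]
  have hfderiv : fderiv ℝ (H ∘ p) y = fderiv ℝ (H ∘ p) z := by
    rw [← add_sub_cancel z y, ← fderiv_comp_add_right, hperiodic]
  rw [hamiltonianField, hfderiv, hamiltonianField]

theorem hamiltonian_eq_of_isIntegralCurve (hJ : IsPoissonTensor J) (hh : Differentiable ℝ h)
    {c : ℝ → E} (hc : IsIntegralCurve c fun _ => hamiltonianField J h) (s t : ℝ) :
    h (c s) = h (c t) := by
  have hderiv : ∀ r, HasDerivAt (h ∘ c) 0 r := fun r => by
    simpa only [hamiltonianField, hJ _] using (hh (c r)).hasFDerivAt.comp_hasDerivAt r (hc r)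
  exact is_const_of_deriv_eq_zero (fun r => (hderiv r).differentiableAt)
    (fun r => (hderiv r).deriv) s t

theorem hamiltonianField_prodPoisson_mul {z : E × E'} (hh : DifferentiableAt ℝ h z.1)
    (hk : DifferentiableAt ℝ k z.2) :
    hamiltonianField (prodPoisson J J') (fun z => h z.1 * k z.2) z =
      (k z.2 • hamiltonianField J h z.1, h z.1 • hamiltonianField J' k z.2) := by
  have hmul := (hh.hasFDerivAt.comp z hasFDerivAt_fst).mul (hk.hasFDerivAt.comp z hasFDerivAt_snd)
  have hfderiv : fderiv ℝ (fun z : E × E' => h z.1 * k z.2) z =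
      h z.1 • (fderiv ℝ k z.2 ∘L ContinuousLinearMap.snd ℝ E E') +
        k z.2 • (fderiv ℝ h z.1 ∘L ContinuousLinearMap.fst ℝ E E') := hmul.fderiv
  simp only [hamiltonianField, hfderiv, prodPoisson_apply, ← map_smul]
  congr 2 <;> ext v <;> simp

theorem isIntegralCurve_prodMk_hamiltonianField (hJ : IsPoissonTensor J) (hJ' : IsPoissonTensor J')
    (hh : Differentiable ℝ h) (hk : Differentiable ℝ k) {c : ℝ → E} {d : ℝ → E'}
    (hc : IsIntegralCurve c fun _ => hamiltonianField J h)
    (hd : IsIntegralCurve d fun _ => hamiltonianField J' k) :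
    IsIntegralCurve (fun t => (c (t * k (d 0)), d (t * h (c 0))))
      fun _ => hamiltonianField (prodPoisson J J') fun z => h z.1 * k z.2 := by
  intro t
  beta_reduce
  rw [hamiltonianField_prodPoisson_mul (hh _) (hk _),
    hamiltonian_eq_of_isIntegralCurve hJ hh hc (t * k (d 0)) 0,
    hamiltonian_eq_of_isIntegralCurve hJ' hk hd (t * h (c 0)) 0]
  exact (hc.comp_mul _ t).prodMk (hd.comp_mul _ t)

theorem isIntegralCurve_prodMk_const_hamiltonianField (hh : Differentiable ℝ h)
    (hk : Differentiable ℝ k) {c : ℝ → E} (hc : IsIntegralCurve c fun _ => hamiltonianField J h)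
    {y : E'} (hy : fderiv ℝ k y = 0) :
    IsIntegralCurve (fun t => (c (t * k y), y))
      fun _ => hamiltonianField (prodPoisson J J') fun z => h z.1 * k z.2 := by
  have hfield : hamiltonianField J' k y = 0 := by rw [hamiltonianField, hy, map_zero]
  intro t
  beta_reduce
  rw [hamiltonianField_prodPoisson_mul (hh _) (hk _), hfield, smul_zero]
  exact (hc.comp_mul _ t).prodMk (hasDerivAt_const t y)

end Hamiltonian

namespace IsLiftedFlow

variable {J : StrongDual ℝ E →L[ℝ] E} {J' : StrongDual ℝ E' →L[ℝ] E'}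
  {p : E →+ A} {p' : E' →+ A'} {f : A → ℝ} {g : A' → ℝ}
  {Φf : ℝ → A → A} {Φg : ℝ → A' → A'} {Φ : ℝ → A × A' → A × A'}

theorem hamiltonian_apply (hJ : IsPoissonTensor J) (hf : Differentiable ℝ (f ∘ p))
    (hΦf : IsLiftedFlow p (hamiltonianField J (f ∘ p)) Φf) (t : ℝ) (x : A) : f (Φf t x) = f x := by
  obtain ⟨c, hc, hcf⟩ := hΦf.exists_lift x
  simpa [hc, hΦf.zero_apply] using hamiltonian_eq_of_isIntegralCurve hJ hf hcf t 0

theorem prodMk_hamiltonianField (hJ : IsPoissonTensor J) (hJ' : IsPoissonTensor J')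
    (hf : Differentiable ℝ (f ∘ p)) (hg : Differentiable ℝ (g ∘ p'))
    (hΦf : IsLiftedFlow p (hamiltonianField J (f ∘ p)) Φf)
    (hΦg : IsLiftedFlow p' (hamiltonianField J' (g ∘ p')) Φg) :
    IsLiftedFlow (p.prodMap p')
      (hamiltonianField (prodPoisson J J') ((fun z => f z.1 * g z.2) ∘ p.prodMap p'))
      fun t z => (Φf (t * g z.2) z.1, Φg (t * f z.1) z.2) where
  zero_apply x := by simp [hΦf.zero_apply, hΦg.zero_apply]
  add_apply s t x := by
    simp only [hΦf.hamiltonian_apply hJ hf, hΦg.hamiltonian_apply hJ' hg, add_mul, hΦf.add_apply,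
      hΦg.add_apply]
  exists_lift x := by
    obtain ⟨c, hc, hcf⟩ := hΦf.exists_lift x.1
    obtain ⟨d, hd, hdg⟩ := hΦg.exists_lift x.2
    have hc0 : f (p (c 0)) = f x.1 := by rw [hc, hΦf.zero_apply]
    have hd0 : g (p' (d 0)) = g x.2 := by rw [hd, hΦg.zero_apply]
    refine ⟨fun t => (c (t * g x.2), d (t * f x.1)), fun t => Prod.ext (hc _) (hd _), ?_⟩
    rw [← hc0, ← hd0]
    exact isIntegralCurve_prodMk_hamiltonianField hJ hJ' hf hg hcf hdg

theorem prod_apply_of_fderiv_eq_zero (hf : ContDiff ℝ 2 (f ∘ p)) (hg : ContDiff ℝ 2 (g ∘ p'))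
    (hΦf : IsLiftedFlow p (hamiltonianField J (f ∘ p)) Φf)
    (hΦ : IsLiftedFlow (p.prodMap p')
      (hamiltonianField (prodPoisson J J') ((fun z => f z.1 * g z.2) ∘ p.prodMap p')) Φ)
    {y : E'} (hy : fderiv ℝ (g ∘ p') y = 0) (t : ℝ) (x : A) :
    Φ t (x, p' y) = (Φf (t * g (p' y)) x, p' y) := by
  obtain ⟨c, hc, hcf⟩ := hΦf.exists_lift x
  have hcurve := isIntegralCurve_prodMk_const_hamiltonianField (J' := J')
    (hf.differentiable two_ne_zero) (hg.differentiable two_ne_zero) hcf hy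
  have hsmooth : ContDiff ℝ 2 ((fun z => f z.1 * g z.2) ∘ p.prodMap p') :=
    (hf.comp contDiff_fst).mul (hg.comp contDiff_snd)
  have happly := hΦ.apply_eq_of_isIntegralCurve (locallyLipschitz_hamiltonianField hsmooth)
    (hamiltonianField_comp_factorsThrough _ _) hcurve t
  simpa [hc, hΦf.zero_apply] using happly

end IsLiftedFlow

theorem iterate_comp_prodMap_apply {X Y : Type*} {P : X × Y → X × Y} (F : X → X) {G : Y → Y}
    {a : Y} (x : X) {n : ℕ}
    (hP : ∀ k, 1 ≤ k → k ≤ n → ∀ u, P (u, G^[k] a) = (u, G^[k] a)) :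
    (P ∘ Prod.map F G)^[n] (x, a) = (F^[n] x, G^[n] a) := by
  induction n with
  | zero => rfl
  | succ n ih =>
    rw [Function.iterate_succ_apply', ih fun k hk hkn => hP k hk (by omega), Function.comp_apply,
      Prod.map_apply, ← Function.iterate_succ_apply' F, ← Function.iterate_succ_apply' G,
      hP (n + 1) (by omega) le_rfl]

theorem coupling_lemma_general {J : StrongDual ℝ E →L[ℝ] E} {J' : StrongDual ℝ E' →L[ℝ] E'}
    (hJ : IsPoissonTensor J) (hJ' : IsPoissonTensor J') {p : E →+ A} {p' : E' →+ A'}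
    (F : A → A) (G : A' → A') (f : A → ℝ) (g : A' → ℝ)
    (hf : ContDiff ℝ 2 (f ∘ p)) (hg : ContDiff ℝ 2 (g ∘ p'))
    (Φf : ℝ → A → A) (hΦf : IsLiftedFlow p (hamiltonianField J (f ∘ p)) Φf)
    (Φg : ℝ → A' → A') (hΦg : IsLiftedFlow p' (hamiltonianField J' (g ∘ p')) Φg)
    (q : ℕ) (hq : 1 ≤ q) (a : A') (ha : G^[q] a = a) (hga : g a = 1)
    (hdga : ∀ y, p' y = a → fderiv ℝ (g ∘ p') y = 0)
    (hsync : ∀ k, 1 ≤ k → k ≤ q - 1 →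
      g (G^[k] a) = 0 ∧ ∀ y, p' y = G^[k] a → fderiv ℝ (g ∘ p') y = 0) :
    (∃ Φ, IsLiftedFlow (p.prodMap p')
      (hamiltonianField (prodPoisson J J') ((fun z => f z.1 * g z.2) ∘ p.prodMap p')) Φ) ∧
    ∀ Φ, IsLiftedFlow (p.prodMap p')
        (hamiltonianField (prodPoisson J J') ((fun z => f z.1 * g z.2) ∘ p.prodMap p')) Φ →
      ∀ x, (Φ 1 ∘ Prod.map F G)^[q] (x, a) = (Φf 1 (F^[q] x), a) := by
  refine ⟨⟨_, hΦf.prodMk_hamiltonianField hJ hJ' (hf.differentiable two_ne_zero)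
    (hg.differentiable two_ne_zero) hΦg⟩, fun Φ hΦ x => ?_⟩
  have htime : ∀ b, (∀ y, p' y = b → fderiv ℝ (g ∘ p') y = 0) → ∀ u,
      Φ 1 (u, b) = (Φf (g b) u, b) := fun b hb u => by
    obtain ⟨y, rfl⟩ := hΦg.surjective b
    simpa using hΦf.prod_apply_of_fderiv_eq_zero hf hg hΦ (hb y rfl) 1 u
  obtain ⟨n, rfl⟩ := Nat.exists_eq_add_of_le' hq
  have hidle : (Φ 1 ∘ Prod.map F G)^[n] (x, a) = (F^[n] x, G^[n] a) :=
    iterate_comp_prodMap_apply F x fun k hk hkn u => by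
      obtain ⟨hgk, hdgk⟩ := hsync k hk hkn
      rw [htime _ hdgk, hgk, hΦf.zero_apply]
  rw [Function.iterate_succ_apply', hidle, Function.comp_apply, Prod.map_apply,
    ← Function.iterate_succ_apply' F, ← Function.iterate_succ_apply' G, ha, htime a hdga, hga]

/-- The Poisson tensor of the symplectic form `∑ dθᵢ ∧ dIᵢ` on `(ι → ℝ) × (ι → ℝ)`, with the sign
for which `hamiltonianField` is `(∂H/∂I, -∂H/∂θ)`. -/
def canonicalPoisson (ι : Type*) [Fintype ι] [DecidableEq ι] :
    StrongDual ℝ ((ι → ℝ) × (ι → ℝ)) →L[ℝ] (ι → ℝ) × (ι → ℝ) :=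
  (ContinuousLinearMap.pi fun i => ContinuousLinearMap.apply ℝ ℝ (0, Pi.single i 1)).prod
    (-ContinuousLinearMap.pi fun i => ContinuousLinearMap.apply ℝ ℝ (Pi.single i 1, 0))

section Canonical

variable {ι : Type*}

theorem hasDerivAt_pi_prod_pi_iff [Finite ι] {c : ℝ → (ι → ℝ) × (ι → ℝ)} {u v : ι → ℝ} {t : ℝ} :
    HasDerivAt c (u, v) t ↔
      ∀ i, HasDerivAt (fun s => (c s).1 i) (u i) t ∧ HasDerivAt (fun s => (c s).2 i) (v i) t := by
  have := Fintype.ofFinite ι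
  rw [hasDerivAt_prod_iff, forall_and, hasDerivAt_pi, hasDerivAt_pi]

variable [Fintype ι] [DecidableEq ι]

theorem canonicalPoisson_apply (L : StrongDual ℝ ((ι → ℝ) × (ι → ℝ))) :
    canonicalPoisson ι L = (fun i => L (0, Pi.single i 1), fun i => -L (Pi.single i 1, 0)) :=
  rfl

theorem isPoissonTensor_canonicalPoisson : IsPoissonTensor (canonicalPoisson ι) := by
  intro L
  have hcoord : ∀ (M : StrongDual ℝ (ι → ℝ)) (v : ι → ℝ), M v = ∑ i, v i * M (Pi.single i 1) :=
    fun M v => by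
      conv_lhs => rw [pi_eq_sum_univ' v]
      simp
  rw [canonicalPoisson_apply, ← L.comp_inl_add_comp_inr, hcoord, hcoord, ← Finset.sum_add_distrib]
  refine Finset.sum_eq_zero fun i _ => ?_
  simp only [ContinuousLinearMap.comp_apply, ContinuousLinearMap.inl_apply,
    ContinuousLinearMap.inr_apply]
  ring

end Canonical

/-- The covering map `projAnn` as a group homomorphism. -/
def projAnnHom (N : ℕ) : (Fin N → ℝ) × (Fin N → ℝ) →+ Ann N where
  toFun := projAnn N
  map_zero' := rfl
  map_add' _ _ := rfl

theorem isHamFlow_iff {N : ℕ} {H : Ann N → ℝ} {Φ : ℝ → Ann N → Ann N} :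
    IsHamFlow N H Φ ↔
      IsLiftedFlow (projAnnHom N)
        (hamiltonianField (canonicalPoisson (Fin N)) (H ∘ projAnnHom N)) Φ where
  mp := fun ⟨hzero, hadd, hlift⟩ => ⟨hzero, hadd, fun x =>
    have ⟨c, hc, hderiv⟩ := hlift x
    ⟨c, hc, fun t => hasDerivAt_pi_prod_pi_iff.2 (hderiv t)⟩⟩
  mpr := fun ⟨hzero, hadd, hlift⟩ => ⟨hzero, hadd, fun x =>
    have ⟨c, hc, hderiv⟩ := hlift x
    ⟨c, hc, fun t => hasDerivAt_pi_prod_pi_iff.1 (hderiv t)⟩⟩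

theorem isHamFlowProd_iff {M M' : ℕ} {H : Ann M × Ann M' → ℝ}
    {Φ : ℝ → Ann M × Ann M' → Ann M × Ann M'} :
    IsHamFlowProd M M' H Φ ↔
      IsLiftedFlow ((projAnnHom M).prodMap (projAnnHom M'))
        (hamiltonianField (prodPoisson (canonicalPoisson (Fin M)) (canonicalPoisson (Fin M')))
          (H ∘ (projAnnHom M).prodMap (projAnnHom M'))) Φ where
  mp := fun ⟨hzero, hadd, hlift⟩ => ⟨hzero, hadd, fun x =>
    have ⟨c, hc, hderiv⟩ := hlift x
    ⟨c, hc, fun t => hasDerivAt_prod_iff.2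
      ((hderiv t).imp hasDerivAt_pi_prod_pi_iff.2 hasDerivAt_pi_prod_pi_iff.2)⟩⟩
  mpr := fun ⟨hzero, hadd, hlift⟩ => ⟨hzero, hadd, fun x =>
    have ⟨c, hc, hderiv⟩ := hlift x
    ⟨c, hc, fun t => (hasDerivAt_prod_iff.1 (hderiv t)).imp hasDerivAt_pi_prod_pi_iff.1
      hasDerivAt_pi_prod_pi_iff.1⟩⟩

/-- The Herman–Marco–Sauzin coupling lemma: if `a` is `q`-periodic for `G` and the
synchronization conditions hold, then the Hamiltonian vector field of `f ⊗ g` is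
complete, the map `Ψ = Φ^{f⊗g} ∘ (F × G)` is well defined, and
`Ψ^q(x, a) = (Φ^f(F^q(x)), a)` for every `x ∈ 𝔸^m`. -/
theorem coupling_lemma (m m' : ℕ) (hm : 1 ≤ m) (hm' : 1 ≤ m')
    (F : Ann m → Ann m) (G : Ann m' → Ann m')
    (f : Ann m → ℝ) (g : Ann m' → ℝ)
    (hf : ContDiff ℝ 2 (f ∘ projAnn m)) (hg : ContDiff ℝ 2 (g ∘ projAnn m'))
    (Φf : ℝ → Ann m → Ann m) (hΦf : IsHamFlow m f Φf)
    (Φg : ℝ → Ann m' → Ann m') (hΦg : IsHamFlow m' g Φg)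
    (q : ℕ) (hq : 1 ≤ q) (a : Ann m') (ha : G^[q] a = a)
    (hga : g a = 1)
    (hdga : ∀ y : (Fin m' → ℝ) × (Fin m' → ℝ), projAnn m' y = a →
      fderiv ℝ (g ∘ projAnn m') y = 0)
    (hsync : ∀ k : ℕ, 1 ≤ k → k ≤ q - 1 →
      g (G^[k] a) = 0 ∧
      ∀ y : (Fin m' → ℝ) × (Fin m' → ℝ), projAnn m' y = G^[k] a →
        fderiv ℝ (g ∘ projAnn m') y = 0) :
    (∃ Φ : ℝ → Ann m × Ann m' → Ann m × Ann m',
      IsHamFlowProd m m' (fun z => f z.1 * g z.2) Φ) ∧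
    ∀ Φ : ℝ → Ann m × Ann m' → Ann m × Ann m',
      IsHamFlowProd m m' (fun z => f z.1 * g z.2) Φ →
      ∀ x : Ann m,
        ((Φ 1) ∘ fun z : Ann m × Ann m' => (F z.1, G z.2))^[q] (x, a) =
          (Φf 1 (F^[q] x), a) := by
  simp only [isHamFlow_iff, isHamFlowProd_iff] at hΦf hΦg ⊢
  exact coupling_lemma_general isPoissonTensor_canonicalPoisson isPoissonTensor_canonicalPoisson
    F G f g hf hg Φf hΦf Φg hΦg q hq a ha hga hdga hsync
end
end

section
/- Let U : 𝕋 → ℝ be U(θ) = −(2π)^{−1} sin(2πθ), so that U'(θ) = −cos(2πθ) and U'(0) = −1. For q ∈ ℕ* define ψ_q : 𝕋 × ℝ → 𝕋 × ℝ by ψ_q(θ, I) = (θ + qI, I − q^{−1} U'(θ + qI)). Then ψ_q is a bijection and for every k ∈ ℤ one has ψ_q^k(0, 0) = (0, k q^{−1}). In particular, after q iterations the point (0,0) drifts from the circle I = 0 to the circle I = 1, and the orbit (ψ_q^k(0,0))_{k∈ℤ} is bi-asymptotic to infinity: |I-component of ψ_q^k(0,0)| → ∞ as k → ±∞. -/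
open scoped BigOperators
open Real

noncomputable section

/-- The canonical representative in `[0,1)` of a point of the circle. -/
noncomputable def rep (θ : T1) : ℝ := ((AddCircle.equivIco 1 0) θ).1

/-- The function `θ ↦ cos (2πθ)` on the circle. -/
noncomputable def cosC (θ : T1) : ℝ := Real.cos (2 * Real.pi * rep θ)

/-- The derivative `U'(θ) = −cos(2πθ)` of the potential `U(θ) = −(2π)⁻¹ sin(2πθ)`. -/
noncomputable def Uderiv (θ : T1) : ℝ := -cosC θ

/-- The map `ψ_q(θ, I) = (θ + qI, I − q⁻¹ U'(θ + qI))` on the annulus `𝕋 × ℝ`. -/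
noncomputable def psiMap (q : ℕ) : T1 × ℝ → T1 × ℝ :=
  fun z => (z.1 + (((q : ℝ) * z.2 : ℝ) : T1),
    z.2 - (q : ℝ)⁻¹ * Uderiv (z.1 + (((q : ℝ) * z.2 : ℝ) : T1)))

/-! `ψ_q` is a shear of `𝕋 × ℝ` in the angle followed by a shear in the action, hence invertible.
Each kick received at angle `0` changes the action by `-q⁻¹ U'(0) = q⁻¹`, and a drift with action
in `q⁻¹ℤ` turns the angle by an integer, so the orbit of the origin never leaves the angle `0` and
climbs by `q⁻¹` at each step. -/

lemma perm_zpow_apply_of_forall_apply_eq {α : Type*} (e : Equiv.Perm α) (x : ℤ → α)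
    (hx : ∀ k, e (x k) = x (k + 1)) (k : ℤ) : (e ^ k) (x 0) = x k := by
  induction k with
  | zero => simp
  | succ n ih => rw [add_comm, zpow_one_add, Equiv.Perm.mul_apply, ih, hx, add_comm]
  | pred n ih =>
    rw [sub_eq_neg_add, zpow_add, zpow_neg_one, Equiv.Perm.mul_apply, ih,
      Equiv.Perm.inv_eq_iff_eq, hx, neg_add_cancel_comm]

section DriftKick

variable {G H : Type*} [AddGroup G] [AddGroup H]

/-- The drift–kick map `(x, y) ↦ (x', y - g x')` with `x' = x + f y`: the shear by `f` followed by
the shear by `-g`, bundled as a permutation. It abstracts `ψ_q` to arbitrary additive groups. -/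
def driftKick (f : H → G) (g : G → H) : Equiv.Perm (G × H) where
  toFun z := (z.1 + f z.2, z.2 - g (z.1 + f z.2))
  invFun z := (z.1 - f (z.2 + g z.1), z.2 + g z.1)
  left_inv z := by simp
  right_inv z := by simp

lemma driftKick_zero_left {f : H → G} (g : G → H) {y : H} (hy : f y = 0) :
    driftKick f g (0, y) = (0, y - g 0) := by
  simp [driftKick, hy]

lemma driftKick_zpow_apply_zero (f : H →+ G) {g : G → H} (hg : f (g 0) = 0) (k : ℤ) :
    (driftKick f g ^ k) (0, 0) = (0, -(k • g 0)) := by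
  have hstep (k : ℤ) : driftKick f g (0, -(k • g 0)) = (0, -((k + 1) • g 0)) := by
    rw [driftKick_zero_left g (by simp [hg]), add_comm k, add_zsmul, one_zsmul, neg_add_rev,
      sub_eq_add_neg]
  simpa using perm_zpow_apply_of_forall_apply_eq _ (fun k : ℤ => ((0 : G), -(k • g 0))) hstep k

end DriftKick

lemma cosC_coe (x : ℝ) : cosC x = cos (2 * π * x) := by
  have hrep : rep x = x - ⌊x⌋ := by
    rw [rep, AddCircle.coe_equivIco_mk_apply, div_one, mul_one, Int.fract]
  rw [cosC, hrep, ← cos_sub_int_mul_two_pi (2 * π * x) ⌊x⌋]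
  ring_nf

lemma Uderiv_zero : Uderiv 0 = -1 := by
  rw [Uderiv, ← AddCircle.coe_zero, cosC_coe, mul_zero, cos_zero]

/-- The map `ψ_q` as a permutation of the annulus, so that `ψ_q ^ k` makes sense for `k : ℤ`. -/
def psiEquiv (q : ℕ) : Equiv.Perm (T1 × ℝ) :=
  driftKick ((QuotientAddGroup.mk' _).comp (AddMonoidHom.mulLeft (q : ℝ)))
    fun θ => (q : ℝ)⁻¹ * Uderiv θ

lemma coe_psiEquiv (q : ℕ) : ⇑(psiEquiv q) = psiMap q := rfl

lemma psiEquiv_zpow_apply_zero {q : ℕ} (hq : q ≠ 0) (k : ℤ) :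
    (psiEquiv q ^ k) (0, 0) = (0, (k : ℝ) / q) := by
  have hperiod : (((q : ℝ) * ((q : ℝ)⁻¹ * Uderiv 0) : ℝ) : T1) = 0 := by
    rw [mul_inv_cancel_left₀ (Nat.cast_ne_zero.mpr hq), Uderiv_zero, AddCircle.coe_neg,
      AddCircle.coe_period, neg_zero]
  rw [psiEquiv, driftKick_zpow_apply_zero _ hperiod, Uderiv_zero]
  simp [div_eq_mul_inv]

lemma tendsto_abs_intCast_div_cocompact {r : ℝ} (hr : r ≠ 0) :
    Filter.Tendsto (fun k : ℤ => |(k : ℝ) / r|) (Filter.cocompact ℤ) Filter.atTop := by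
  simpa only [abs_div, Int.norm_eq_abs] using
    (tendsto_norm_cocompact_atTop (E := ℤ)).atTop_div_const (abs_pos.mpr hr)

/-- The map `ψ_q` is a bijection of the annulus; its orbit through `(0,0)` satisfies
`ψ_q^k(0,0) = (0, k/q)`: in particular after `q` iterations the point `(0,0)` drifts
from the circle `I = 0` to the circle `I = 1`, and the bi-infinite orbit is
bi-asymptotic to infinity. -/
theorem psi_unstable_orbit (q : ℕ) (hq : 1 ≤ q) :
    Function.Bijective (psiMap q) ∧
    (∀ k : ℕ, (psiMap q)^[k] (((0 : ℝ) : T1), (0 : ℝ)) = (((0 : ℝ) : T1), (k : ℝ) / q)) ∧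
    (∀ k : ℤ, psiMap q (((0 : ℝ) : T1), (k : ℝ) / q) = (((0 : ℝ) : T1), ((k : ℝ) + 1) / q)) ∧
    (psiMap q)^[q] (((0 : ℝ) : T1), (0 : ℝ)) = (((0 : ℝ) : T1), (1 : ℝ)) ∧
    Filter.Tendsto (fun k : ℤ => |(k : ℝ) / q|) (Filter.cocompact ℤ) Filter.atTop := by
  have hq0 : q ≠ 0 := Nat.one_le_iff_ne_zero.mp hq
  have hqR : (q : ℝ) ≠ 0 := Nat.cast_ne_zero.mpr hq0
  have horbit := psiEquiv_zpow_apply_zero hq0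
  have hiterate (k : ℕ) : (psiMap q)^[k] (0, 0) = (0, (k : ℝ) / q) := by
    rw [← coe_psiEquiv, Equiv.Perm.iterate_eq_pow, ← zpow_natCast, horbit, Int.cast_natCast]
  have hstep (k : ℤ) : psiMap q (0, (k : ℝ) / q) = (0, ((k : ℝ) + 1) / q) := by
    rw [← coe_psiEquiv, ← horbit, ← Equiv.Perm.mul_apply, ← zpow_one_add, horbit, Int.cast_add,
      Int.cast_one, add_comm]
  have hdrift : (psiMap q)^[q] (0, 0) = (0, 1) := by rw [hiterate, div_self hqR]
  exact ⟨(psiEquiv q).bijective, hiterate, hstep, hdrift,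
    tendsto_abs_intCast_div_cocompact hqR⟩
end
end

section
/- For p ∈ ℕ*, the analytic function η_p : 𝕋 → ℝ defined by η_p(θ) = ( (1/p) Σ_{l=0}^{p−1} cos(2πlθ) )² satisfies η_p(0) = 1, η_p'(0) = 0, and η_p(k/p) = 0, η_p'(k/p) = 0 for every 1 ≤ k ≤ p−1. Moreover, for every α ≥ 1 and L₁ > 0 its Gevrey norm satisfies |η_p|_{α,L₁} ≤ exp(2αL₁(2πp)^{1/α}). -/
open scoped BigOperators ENNReal
open Real

noncomputable section

/-- Gevrey-(α, L) norm of a real function on a set `J ⊆ ℝ`, as an extended real: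
`|f|_{α,L} = Σ_{l ∈ ℕ} L^{lα} (l!)^{−α} sup_J |f^{(l)}|`. -/
noncomputable def gevreyNorm1 (α L : ℝ) (J : Set ℝ) (f : ℝ → ℝ) : ℝ≥0∞ :=
  ∑' l : ℕ,
    ENNReal.ofReal (L ^ (α * (l : ℝ)) / ((Nat.factorial l : ℝ) ^ α) *
      ⨆ x : J, |deriv^[l] f x.1|)

/-- The trigonometric function `η_p(θ) = ((1/p) Σ_{l=0}^{p−1} cos(2πlθ))²`, viewed as a
`1`-periodic function on `ℝ` (i.e. a function on `𝕋 = ℝ/ℤ`). -/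
noncomputable def eta (p : ℕ) : ℝ → ℝ :=
  fun θ => ((1 / (p : ℝ)) * ∑ l ∈ Finset.range p, Real.cos (2 * Real.pi * (l : ℝ) * θ)) ^ 2

/-!
`η_p` is the square of the mean `g` of `cos (2πlθ)` over `l < p`. Since `|g| ≤ 1`, the value
`η_p(0) = 1` is a maximum; since `g` vanishes at `k/p`, so does `η_p`, and this is a minimum of the
nonnegative function `η_p`. Hence all these points are critical.

The frequencies of `g` are at most `2πp`, so `|g^(l)| ≤ (2πp)^l`, and Leibniz' rule together with
the binomial theorem gives `|η_p^(l)| ≤ (4πp)^l`. With `x = L (4πp)^(1/α)` the `l`-th term of the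
Gevrey norm is then at most `(x^l / l!)^α`, and the sum of these `α`-th powers is at most the `α`-th
power of the sum, which is `exp (α x)`. Finally `(4πp)^(1/α) ≤ 2 (2πp)^(1/α)` because `α ≥ 1`.
-/

open scoped ContDiff

section BernsteinBound

variable {𝕜 F 𝔸 : Type*} [NontriviallyNormedField 𝕜] [NormedAddCommGroup F] [NormedSpace 𝕜 F]
  [NormedRing 𝔸] [NormedAlgebra 𝕜 𝔸]

/-- A smooth `f` satisfies `BernsteinBound A M f` if its derivatives obey the bounds
`‖f^(l)‖ ≤ A * M ^ l` that Bernstein's inequality gives for a function bounded by `A` whose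
frequencies are at most `M`. Neither `A` nor `M` is required to be optimal. -/
structure BernsteinBound (A M : ℝ) (f : 𝕜 → F) : Prop where
  contDiff : ContDiff 𝕜 ∞ f
  norm_iteratedDeriv_le (l : ℕ) (x : 𝕜) : ‖iteratedDeriv l f x‖ ≤ A * M ^ l

namespace BernsteinBound

variable {A B M N : ℝ}

theorem norm_le {f : 𝕜 → F} (hf : BernsteinBound A M f) (x : 𝕜) : ‖f x‖ ≤ A := by
  simpa using hf.norm_iteratedDeriv_le 0 x

theorem nonneg {f : 𝕜 → F} (hf : BernsteinBound A M f) : 0 ≤ A :=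
  (norm_nonneg _).trans (hf.norm_le 0)

theorem mono {f : 𝕜 → F} (hf : BernsteinBound A M f) (hAB : A ≤ B) (hM : 0 ≤ M) (hMN : M ≤ N) :
    BernsteinBound B N f where
  contDiff := hf.contDiff
  norm_iteratedDeriv_le l x := by
    have hB : 0 ≤ B := hf.nonneg.trans hAB
    exact (hf.norm_iteratedDeriv_le l x).trans (by gcongr)

theorem sum {ι : Type*} {s : Finset ι} {A : ι → ℝ} {f : ι → 𝕜 → F}
    (hf : ∀ i ∈ s, BernsteinBound (A i) M (f i)) :
    BernsteinBound (∑ i ∈ s, A i) M fun x ↦ ∑ i ∈ s, f i x where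
  contDiff := ContDiff.sum fun i hi ↦ (hf i hi).contDiff
  norm_iteratedDeriv_le l x := by
    rw [iteratedDeriv_fun_sum fun i hi ↦ ((hf i hi).contDiff.of_le (mod_cast le_top)).contDiffAt,
      Finset.sum_mul]
    exact norm_sum_le_of_le s fun i hi ↦ (hf i hi).norm_iteratedDeriv_le l x

theorem const_smul {f : 𝕜 → F} (hf : BernsteinBound A M f) (c : 𝕜) :
    BernsteinBound (‖c‖ * A) M fun x ↦ c • f x where
  contDiff := hf.contDiff.const_smul c
  norm_iteratedDeriv_le l x := by
    rw [iteratedDeriv_fun_const_smul_field, norm_smul, mul_assoc]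
    gcongr
    exact hf.norm_iteratedDeriv_le l x

theorem mul {f g : 𝕜 → 𝔸} (hf : BernsteinBound A M f) (hg : BernsteinBound B N g) :
    BernsteinBound (A * B) (M + N) fun x ↦ f x * g x where
  contDiff := hf.contDiff.mul hg.contDiff
  norm_iteratedDeriv_le l x := by
    have leibniz := norm_iteratedFDeriv_mul_le hf.contDiff hg.contDiff x (n := l) (mod_cast le_top)
    simp only [norm_iteratedFDeriv_eq_norm_iteratedDeriv] at leibniz
    calc ‖iteratedDeriv l (fun y ↦ f y * g y) x‖
        ≤ ∑ i ∈ Finset.range (l + 1),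
            l.choose i * ‖iteratedDeriv i f x‖ * ‖iteratedDeriv (l - i) g x‖ := leibniz
      _ ≤ ∑ i ∈ Finset.range (l + 1), l.choose i * (A * M ^ i) * (B * N ^ (l - i)) := by
          gcongr with i
          · exact mul_nonneg (Nat.cast_nonneg _)
              ((norm_nonneg _).trans (hf.norm_iteratedDeriv_le i x))
          · exact hf.norm_iteratedDeriv_le i x
          · exact hg.norm_iteratedDeriv_le (l - i) x
      _ = A * B * (M + N) ^ l := by
          rw [add_pow, Finset.mul_sum]
          exact Finset.sum_congr rfl fun i _ ↦ by ring

theorem cos_const_mul (ν : ℝ) : BernsteinBound 1 |ν| fun θ ↦ cos (ν * θ) where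
  contDiff := by fun_prop
  norm_iteratedDeriv_le l θ := by
    rw [iteratedDeriv_comp_const_mul contDiff_cos, norm_mul, norm_pow, norm_eq_abs, norm_eq_abs,
      one_mul]
    exact mul_le_of_le_one_right (by positivity) (abs_iteratedDeriv_cos_le_one l _)

end BernsteinBound

end BernsteinBound

theorem sum_rpow_le_rpow_sum {ι : Type*} (s : Finset ι) (a : ι → ℝ≥0∞) {α : ℝ} (hα : 1 ≤ α) :
    ∑ i ∈ s, a i ^ α ≤ (∑ i ∈ s, a i) ^ α := by
  induction s using Finset.cons_induction with
  | empty => simp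
  | cons i s hi ih =>
    rw [Finset.sum_cons, Finset.sum_cons]
    calc a i ^ α + ∑ j ∈ s, a j ^ α ≤ a i ^ α + (∑ j ∈ s, a j) ^ α := by gcongr
      _ ≤ (a i + ∑ j ∈ s, a j) ^ α := ENNReal.add_rpow_le_rpow_add _ _ hα

theorem tsum_rpow_le_rpow_tsum {ι : Type*} (a : ι → ℝ≥0∞) {α : ℝ} (hα : 1 ≤ α) :
    ∑' i, a i ^ α ≤ (∑' i, a i) ^ α := by
  rw [ENNReal.tsum_eq_iSup_sum]
  refine iSup_le fun s ↦ (sum_rpow_le_rpow_sum s a hα).trans ?_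
  gcongr
  exact ENNReal.sum_le_tsum s

theorem tsum_ofReal_pow_div_factorial {x : ℝ} (hx : 0 ≤ x) :
    ∑' l : ℕ, ENNReal.ofReal (x ^ l / l.factorial) = ENNReal.ofReal (exp x) := by
  have hsum := NormedSpace.expSeries_div_hasSum_exp x
  rw [← ENNReal.ofReal_tsum_of_nonneg (fun l ↦ by positivity) hsum.summable, hsum.tsum_eq,
    exp_eq_exp_ℝ]

theorem gevrey_weight_mul_pow {α L C : ℝ} (hα : α ≠ 0) (hL : 0 ≤ L) (hC : 0 ≤ C) (l : ℕ) :
    L ^ (α * l) / (l.factorial : ℝ) ^ α * C ^ l =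
      ((L * C ^ (1 / α)) ^ l / l.factorial) ^ α := by
  have hC_pow : ((C ^ (1 / α)) ^ l) ^ α = C ^ l := by
    rw [← rpow_pow_comm (by positivity), one_div, rpow_inv_rpow hC hα]
  have hL_pow : (L ^ l) ^ α = L ^ (α * l) := by
    rw [← rpow_pow_comm hL, rpow_mul_natCast hL]
  rw [div_rpow (by positivity) (by positivity), mul_pow, mul_rpow (by positivity) (by positivity),
    hC_pow, hL_pow, div_mul_eq_mul_div]

theorem gevreyNorm1_le_of_abs_deriv_le {α L A C : ℝ} {J : Set ℝ} {f : ℝ → ℝ} (hα : 1 ≤ α)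
    (hL : 0 ≤ L) (hA : 0 ≤ A) (hC : 0 ≤ C) (hf : ∀ l : ℕ, ∀ x ∈ J, |deriv^[l] f x| ≤ A * C ^ l) :
    gevreyNorm1 α L J f ≤ ENNReal.ofReal (A * exp (α * L * C ^ (1 / α))) := by
  set x := L * C ^ (1 / α) with hx
  have hx0 : 0 ≤ x := by positivity
  have hα0 : 0 < α := by linarith
  have term_le (l : ℕ) :
      ENNReal.ofReal (L ^ (α * l) / (l.factorial : ℝ) ^ α * ⨆ y : J, |deriv^[l] f y|) ≤
        ENNReal.ofReal A * ENNReal.ofReal (x ^ l / l.factorial) ^ α := by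
    rw [ENNReal.ofReal_rpow_of_nonneg (by positivity) hα0.le, ← ENNReal.ofReal_mul hA,
      ← gevrey_weight_mul_pow hα0.ne' hL hC, mul_left_comm]
    gcongr
    exact Real.iSup_le (fun y ↦ hf l y y.2) (by positivity)
  calc gevreyNorm1 α L J f
      ≤ ∑' l : ℕ, ENNReal.ofReal A * ENNReal.ofReal (x ^ l / l.factorial) ^ α :=
        ENNReal.tsum_le_tsum term_le
    _ ≤ ENNReal.ofReal A * (∑' l : ℕ, ENNReal.ofReal (x ^ l / l.factorial)) ^ α := by
        rw [ENNReal.tsum_mul_left]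
        gcongr
        exact tsum_rpow_le_rpow_tsum _ hα
    _ = ENNReal.ofReal (A * exp (α * L * C ^ (1 / α))) := by
        rw [tsum_ofReal_pow_div_factorial hx0, ENNReal.ofReal_rpow_of_nonneg (exp_nonneg x) hα0.le,
          ← exp_mul, ENNReal.ofReal_mul hA, hx, mul_comm _ α, mul_assoc α]

theorem BernsteinBound.gevreyNorm1_le {α L A M : ℝ} {f : ℝ → ℝ} (hf : BernsteinBound A M f)
    (hα : 1 ≤ α) (hL : 0 ≤ L) (hM : 0 ≤ M) (J : Set ℝ) :
    gevreyNorm1 α L J f ≤ ENNReal.ofReal (A * exp (α * L * M ^ (1 / α))) :=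
  gevreyNorm1_le_of_abs_deriv_le hα hL hf.nonneg hM fun l x _ ↦ by
    simpa only [iteratedDeriv_eq_iterate, norm_eq_abs] using hf.norm_iteratedDeriv_le l x

/-- The mean of the functions `cos (2πlθ)` over `0 ≤ l < p`, whose square is `eta p`. -/
def cosMean (p : ℕ) (θ : ℝ) : ℝ :=
  1 / (p : ℝ) * ∑ l ∈ Finset.range p, cos (2 * π * l * θ)

theorem eta_eq_cosMean_sq (p : ℕ) (θ : ℝ) : eta p θ = cosMean p θ ^ 2 :=
  rfl

theorem cosMean_periodic (p : ℕ) : Function.Periodic (cosMean p) 1 := fun θ ↦ by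
  unfold cosMean
  congr! 2 with l
  rw [← cos_add_nat_mul_two_pi (2 * π * l * θ) l]
  ring_nf

theorem cosMean_zero {p : ℕ} (hp : p ≠ 0) : cosMean p 0 = 1 := by
  simp [cosMean, hp]

theorem cosMean_int_div_eq_zero {p : ℕ} {k : ℤ} (hk : ¬(p : ℤ) ∣ k) : cosMean p (k / p) = 0 := by
  rcases eq_or_ne p 0 with rfl | hp
  · simp [cosMean]
  have hp' : (p : ℝ) ≠ 0 := mod_cast hp
  have angle_ne (m : ℤ) : 2 * π * k / p ≠ m * (2 * π) := fun h ↦ hk ⟨m, by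
    field_simp at h
    exact_mod_cast h⟩
  have half_angle : p * (2 * π * k / p) / 2 = k * π := by field_simp
  have sum_eq_zero := sum_cos p angle_ne 0
  rw [half_angle, sin_int_mul_pi, zero_mul, zero_div] at sum_eq_zero
  refine mul_eq_zero_of_right _ (Eq.trans ?_ sum_eq_zero)
  congr! 2 with l
  ring

theorem bernsteinBound_cosMean (p : ℕ) : BernsteinBound 1 (2 * π * p) (cosMean p) := by
  have hcos : ∀ l ∈ Finset.range p,
      BernsteinBound 1 (2 * π * p) fun θ ↦ cos (2 * π * l * θ) := fun l hl ↦ by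
    have hlp : l ≤ p := (Finset.mem_range.mp hl).le
    refine (BernsteinBound.cos_const_mul (2 * π * l)).mono le_rfl (abs_nonneg _) ?_
    rw [abs_of_nonneg (by positivity)]
    gcongr
  refine ((BernsteinBound.sum hcos).const_smul (1 / (p : ℝ))).mono ?_ (by positivity) le_rfl
  simpa using inv_mul_le_one

theorem bernsteinBound_eta (p : ℕ) : BernsteinBound 1 (2 * (2 * π * p)) (eta p) := by
  have hmul : BernsteinBound (1 * 1) (2 * π * p + 2 * π * p) fun θ ↦ cosMean p θ * cosMean p θ :=
    (bernsteinBound_cosMean p).mul (bernsteinBound_cosMean p)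
  have eta_eq_mul : eta p = fun θ ↦ cosMean p θ * cosMean p θ := funext fun θ ↦ sq (cosMean p θ)
  rwa [eta_eq_mul, two_mul, ← mul_one (1 : ℝ)]

theorem eta_zero {p : ℕ} (hp : p ≠ 0) : eta p 0 = 1 := by
  rw [eta_eq_cosMean_sq, cosMean_zero hp, one_pow]

theorem deriv_eta_zero {p : ℕ} (hp : p ≠ 0) : deriv (eta p) 0 = 0 := by
  have hmax : IsMaxOn (eta p) Set.univ 0 := isMaxOn_iff.mpr fun θ _ ↦ by
    rw [eta_zero hp]
    exact (le_norm_self _).trans ((bernsteinBound_eta p).norm_le θ)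
  exact (hmax.isLocalMax Filter.univ_mem).deriv_eq_zero

theorem eta_int_div_eq_zero {p : ℕ} {k : ℤ} (hk : ¬(p : ℤ) ∣ k) : eta p (k / p) = 0 := by
  rw [eta_eq_cosMean_sq, cosMean_int_div_eq_zero hk, zero_pow two_ne_zero]

theorem deriv_eta_eq_zero_of_eta_eq_zero {p : ℕ} {θ : ℝ} (hθ : eta p θ = 0) :
    deriv (eta p) θ = 0 := by
  have hmin : IsMinOn (eta p) Set.univ θ := isMinOn_iff.mpr fun x _ ↦
    hθ.trans_le (sq_nonneg (cosMean p x))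
  exact (hmin.isLocalMin Filter.univ_mem).deriv_eq_zero

theorem gevreyNorm1_eta_le (p : ℕ) {α L : ℝ} (hα : 1 ≤ α) (hL : 0 ≤ L) (J : Set ℝ) :
    gevreyNorm1 α L J (eta p) ≤
      ENNReal.ofReal (exp (2 * α * L * (2 * π * p) ^ (1 / α))) := by
  have two_rpow_le : (2 : ℝ) ^ (1 / α) ≤ 2 :=
    rpow_le_self_of_one_le one_le_two ((div_le_one (by linarith)).mpr hα)
  refine ((bernsteinBound_eta p).gevreyNorm1_le hα hL (by positivity) J).trans ?_
  rw [one_mul]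
  refine ENNReal.ofReal_le_ofReal (exp_le_exp.mpr ?_)
  calc α * L * (2 * (2 * π * p)) ^ (1 / α)
      = 2 ^ (1 / α) * (α * L * (2 * π * p) ^ (1 / α)) := by
        rw [mul_rpow zero_le_two (by positivity)]
        ring
    _ ≤ 2 * (α * L * (2 * π * p) ^ (1 / α)) := by gcongr
    _ = 2 * α * L * (2 * π * p) ^ (1 / α) := by ring

/-- Properties of `η_p`: it is `1`-periodic, `η_p(0) = 1`, `η_p'(0) = 0`,
`η_p(k/p) = η_p'(k/p) = 0` for `1 ≤ k ≤ p−1`, and its Gevrey norm satisfies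
`|η_p|_{α,L₁} ≤ exp(2αL₁(2πp)^{1/α})` for every `α ≥ 1`, `L₁ > 0`. -/
theorem eta_properties (p : ℕ) (hp : 1 ≤ p) :
    Function.Periodic (eta p) 1 ∧
    eta p 0 = 1 ∧ deriv (eta p) 0 = 0 ∧
    (∀ k : ℕ, 1 ≤ k → k ≤ p - 1 →
      eta p ((k : ℝ) / p) = 0 ∧ deriv (eta p) ((k : ℝ) / p) = 0) ∧
    (∀ α L₁ : ℝ, 1 ≤ α → 0 < L₁ →
      gevreyNorm1 α L₁ Set.univ (eta p) ≤
        ENNReal.ofReal (Real.exp (2 * α * L₁ * (2 * Real.pi * p) ^ (1 / α)))) := by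
  have hp0 : p ≠ 0 := Nat.one_le_iff_ne_zero.mp hp
  have eta_periodic : Function.Periodic (eta p) 1 := (cosMean_periodic p).comp (· ^ 2)
  refine ⟨eta_periodic, eta_zero hp0, deriv_eta_zero hp0, fun k hk hkp ↦ ?_,
    fun α L₁ hα hL ↦ gevreyNorm1_eta_le p hα hL.le Set.univ⟩
  have not_dvd : ¬p ∣ k := Nat.not_dvd_of_pos_of_lt hk (by lia)
  have eta_eq_zero : eta p (k / p) = 0 := by
    simpa only [Int.cast_natCast] using
      eta_int_div_eq_zero (Int.natCast_dvd_natCast.not.mpr not_dvd)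
  exact ⟨eta_eq_zero, deriv_eta_eq_zero_of_eta_eq_zero eta_eq_zero⟩
end
end
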